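/- The sign map obtained from a skew-symmetric real matrix is invariant under basis change up to global sign: if A is skew-symmetric with a_{ij} ≠ 0 and C is the matrix obtained by the column-exchange-and-sign-change construction at {i, j}, then the map S ↦ sign Pf(C_S) equals the map S ↦ sign Pf(A_{S Δ {i,j}}) times the constant sign(a_{ij}); in particular the two families of signs {sign Pf(A_{S Δ {i,j}})}_S and {sign Pf(C_S)}_S are equal up to a single global sign. -/

import Mathlib

/-- The Pfaffian of an `N × N` matrix (intended for skew-symmetric matrices):
`Pf(A) = ∑_{σ ∈ S'_N} sign(σ) ∏_{k=1}^{N/2} a_{σ(2k-1) σ(2k)}`, where `S'_N` is the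
set of permutations `σ` of `{0, …, N-1}` such that `σ(2k)` is minimal among
`σ(2k), σ(2k+1), …, σ(N-1)` for each `k`.  It is `0` for odd `N` and `1` for `N = 0`. -/
noncomputable def pfaffian {N : ℕ} (A : Matrix (Fin N) (Fin N) ℝ) : ℝ :=
  if h : 2 ∣ N then
    ∑ σ ∈ Finset.univ.filter
        (fun σ : Equiv.Perm (Fin N) =>
          ∀ p q : Fin N, 2 ∣ (p : ℕ) → p ≤ q → σ p ≤ σ q),
      ((Equiv.Perm.sign σ : ℤ) : ℝ) *
        ∏ k : Fin (N / 2),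
          A (σ ⟨2 * (k : ℕ), by have := k.2; omega⟩)
            (σ ⟨2 * (k : ℕ) + 1, by have := k.2; omega⟩)
  else 0

/-- The Pfaffian of the principal minor of `A` indexed by the subset `S`,
with rows and columns of the minor taken in increasing order of index. -/
noncomputable def pfMinor {n : ℕ} (A : Matrix (Fin n) (Fin n) ℝ) (S : Finset (Fin n)) : ℝ :=
  pfaffian (Matrix.of fun p q : Fin S.card =>
    A ((S.orderIsoOfFin rfl p : S) : Fin n) ((S.orderIsoOfFin rfl q : S) : Fin n))


/-- The compound matrix `(A, I_n)` after swapping columns `i, j` of `A` with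
columns `i, j` of the identity: its left block. -/
def swapLeft {n : ℕ} (A : Matrix (Fin n) (Fin n) ℝ) (i j : Fin n) :
    Matrix (Fin n) (Fin n) ℝ :=
  Matrix.of fun r c => if c = i ∨ c = j then (if r = c then 1 else 0) else A r c

/-- The compound matrix `(A, I_n)` after swapping columns `i, j` of `A` with
columns `i, j` of the identity: its right block. -/
def swapRight {n : ℕ} (A : Matrix (Fin n) (Fin n) ℝ) (i j : Fin n) :
    Matrix (Fin n) (Fin n) ℝ :=
  Matrix.of fun r c => if c = i ∨ c = j then A r c else (if r = c then 1 else 0)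

/-- The sign `ρ_k`, equal to `−1` for `i ≤ k < j` and `+1` otherwise. -/
noncomputable def rhoSign {n : ℕ} (i j k : Fin n) : ℝ := if i ≤ k ∧ k < j then -1 else 1

/-! Regard the numbers `Pf(A_T)` as the amplitudes of a state `φ` in the fermionic Fock space whose
occupation states are the subsets `T`. For skew-symmetric `A`, the expansions of the sub-Pfaffians
along their rows say that every operator `aₖ - ∑ l, A k l • a†ₗ` annihilates `φ`, and these
equations determine `φ` up to its amplitude at `∅`. Conjugation by `γᵢ γⱼ`, where `γₖ = aₖ + a†ₖ`,
replaces `aₖ` by `-a†ₖ` and `a†ₖ` by `-aₖ` for `k = i, j`, and so turns the equations of `A` into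
those of the matrix `B` obtained by exchanging the columns `i` and `j` of `(A, I)` and
row-reducing. Up to the Jordan–Wigner signs of `γᵢ γⱼ`, the state `γᵢ γⱼ φ` has amplitude
`Pf(A_{T ∆ {i,j}})` at `T`. These signs are `-∏ t ∈ T, rhoSign i j t`, and the diagonal change of
sign from `B` to `C` cancels their dependence on `T`. The amplitude at `∅` identifies the remaining
constant as `Pf(A_{{i,j}}) = A i j`. -/

open scoped symmDiff

section Finset

variable {α : Type*}

theorem symmDiff_singleton_of_mem [DecidableEq α] {s : Finset α} {a : α} (ha : a ∈ s) :
    s ∆ {a} = s.erase a := by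
  rw [symmDiff_of_ge (Finset.singleton_subset_iff.mpr ha), Finset.sdiff_singleton_eq_erase]

theorem symmDiff_singleton_of_notMem [DecidableEq α] {s : Finset α} {a : α} (ha : a ∉ s) :
    s ∆ {a} = insert a s := by
  rw [Finset.symmDiff_eq_union (Finset.disjoint_singleton_right.mpr ha), Finset.union_comm,
    Finset.insert_eq]

theorem symmDiff_singleton_symmDiff_singleton [DecidableEq α] (s : Finset α) {a b : α}
    (hab : a ≠ b) : (s ∆ {a}) ∆ {b} = s ∆ {a, b} := by
  rw [symmDiff_assoc, symmDiff_singleton_of_notMem (by simpa using hab.symm), Finset.pair_comm]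

theorem finset_strong_induction_on_min [LinearOrder α] {p : Finset α → Prop} (s : Finset α)
    (empty : p ∅)
    (insert : ∀ (a : α) (s : Finset α), (∀ x ∈ s, a < x) → (∀ t ⊆ s, p t) → p (insert a s)) :
    p s := by
  suffices h : ∀ t ⊆ s, p t from h s subset_rfl
  induction s using Finset.induction_on_min with
  | empty => simpa using empty
  | insert a s ha ih =>
    intro t ht
    have herase : t.erase a ⊆ s := Finset.subset_insert_iff.mp ht
    by_cases hat : a ∈ t
    · rw [← Finset.insert_erase hat]
      exact insert a _ (fun x hx => ha x (herase hx)) fun u hu => ih u (hu.trans herase)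
    · exact ih t (Finset.erase_eq_of_notMem hat ▸ herase)

end Finset

/-- The fermionic Fock space over the sites `ι`: the function `f` stands for the linear combination
of occupation states in which the set `T` of occupied sites has amplitude `f T`. -/
def FockSpace (ι R : Type*) : Type _ := Finset ι → R

namespace FockSpace

variable {ι R : Type*}

@[ext]
theorem ext {f g : FockSpace ι R} (h : ∀ T, f T = g T) : f = g := funext h

section AddCommGroup

variable [AddCommGroup R]

instance : AddCommGroup (FockSpace ι R) := inferInstanceAs (AddCommGroup (Finset ι → R))

@[simp]
theorem zero_apply (T : Finset ι) : (0 : FockSpace ι R) T = 0 := rfl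

@[simp]
theorem neg_apply (f : FockSpace ι R) (T : Finset ι) : (-f) T = -f T := rfl

@[simp]
theorem sub_apply (f g : FockSpace ι R) (T : Finset ι) : (f - g) T = f T - g T := rfl

@[simp]
theorem sum_apply {α : Type*} (s : Finset α) (f : α → FockSpace ι R) (T : Finset ι) :
    (∑ a ∈ s, f a) T = ∑ a ∈ s, f a T :=
  Finset.sum_apply T s f

end AddCommGroup

instance [Ring R] : Module R (FockSpace ι R) := inferInstanceAs (Module R (Finset ι → R))

@[simp]
theorem smul_apply [Ring R] (c : R) (f : FockSpace ι R) (T : Finset ι) : (c • f) T = c * f T := rfl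

end FockSpace

section FermionOperators

variable {ι R : Type*} [LinearOrder ι] [CommRing R]

/-- The Jordan–Wigner sign `(-1) ^ #{t ∈ T | t < k}`, encoded as a product over `T` so that signs
for different `k` can be multiplied termwise. -/
def jordanWignerSign (k : ι) (T : Finset ι) : R := ∏ t ∈ T, if t < k then -1 else 1

theorem jordanWignerSign_mul_self (k : ι) (T : Finset ι) :
    (jordanWignerSign k T : R) * jordanWignerSign k T = 1 := by
  rw [jordanWignerSign, ← Finset.prod_mul_distrib]
  exact Finset.prod_eq_one fun t _ => by split_ifs <;> ring

theorem jordanWignerSign_of_forall_le {k : ι} {T : Finset ι} (hk : ∀ t ∈ T, k ≤ t) :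
    (jordanWignerSign k T : R) = 1 :=
  Finset.prod_eq_one fun t ht => if_neg (hk t ht).not_gt

theorem jordanWignerSign_symmDiff_singleton (k l : ι) (T : Finset ι) :
    (jordanWignerSign k (T ∆ {l}) : R) = (if l < k then -1 else 1) * jordanWignerSign k T := by
  by_cases hl : l ∈ T
  · rw [symmDiff_singleton_of_mem hl, jordanWignerSign, jordanWignerSign,
      ← Finset.mul_prod_erase T _ hl, ← mul_assoc]
    split_ifs <;> ring
  · rw [symmDiff_singleton_of_notMem hl, jordanWignerSign, Finset.prod_insert hl, jordanWignerSign]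

/-- The Majorana operator `γₖ`, which toggles the occupation of the site `k`. -/
def majorana (k : ι) : Module.End R (FockSpace ι R) where
  toFun f T := jordanWignerSign k T * f (T ∆ {k})
  map_add' _ _ := FockSpace.ext fun _ => mul_add _ _ _
  map_smul' _ _ := FockSpace.ext fun _ => mul_left_comm _ _ _

/-- The projection `nₖ` onto the states in which the site `k` is occupied. -/
def occupation (k : ι) : Module.End R (FockSpace ι R) where
  toFun f T := if k ∈ T then f T else 0
  map_add' _ _ := FockSpace.ext fun _ => ite_add_zero
  map_smul' _ _ := FockSpace.ext fun _ => (mul_ite_zero _ _ _).symm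

theorem majorana_apply (k : ι) (f : FockSpace ι R) (T : Finset ι) :
    majorana k f T = jordanWignerSign k T * f (T ∆ {k}) := rfl

theorem occupation_apply (k : ι) (f : FockSpace ι R) (T : Finset ι) :
    occupation k f T = if k ∈ T then f T else 0 := rfl

theorem majorana_mul_self (k : ι) :
    (majorana k * majorana k : Module.End R (FockSpace ι R)) = 1 := by
  refine LinearMap.ext fun f => FockSpace.ext fun T => ?_
  rw [Module.End.mul_apply, majorana_apply, majorana_apply, symmDiff_symmDiff_cancel_right,
    jordanWignerSign_symmDiff_singleton, if_neg (lt_irrefl k), one_mul, ← mul_assoc,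
    jordanWignerSign_mul_self, one_mul, Module.End.one_apply]

theorem majorana_anticomm {k l : ι} (hkl : k ≠ l) :
    (majorana k * majorana l : Module.End R (FockSpace ι R)) = -(majorana l * majorana k) := by
  refine LinearMap.ext fun f => FockSpace.ext fun T => ?_
  simp only [Module.End.mul_apply, LinearMap.neg_apply, FockSpace.neg_apply, majorana_apply,
    jordanWignerSign_symmDiff_singleton, symmDiff_right_comm T {l} {k}]
  rcases hkl.lt_or_gt with h | h <;> rw [if_pos h, if_neg h.not_gt] <;> ring

theorem isIdempotentElem_occupation (k : ι) :
    IsIdempotentElem (occupation k : Module.End R (FockSpace ι R)) := by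
  refine LinearMap.ext fun f => FockSpace.ext fun T => ?_
  simp only [Module.End.mul_apply, occupation_apply]
  split_ifs <;> rfl

theorem occupation_commute (k l : ι) :
    Commute (occupation k : Module.End R (FockSpace ι R)) (occupation l) := by
  refine LinearMap.ext fun f => FockSpace.ext fun T => ?_
  simp only [Module.End.mul_apply, occupation_apply]
  split_ifs <;> rfl

theorem occupation_commute_majorana {k l : ι} (hkl : k ≠ l) :
    Commute (occupation k : Module.End R (FockSpace ι R)) (majorana l) := by
  refine LinearMap.ext fun f => FockSpace.ext fun T => ?_
  simp [Module.End.mul_apply, occupation_apply, majorana_apply, Finset.mem_symmDiff, hkl]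

theorem one_sub_occupation_commute_majorana {k l : ι} (hkl : k ≠ l) :
    Commute (1 - occupation k : Module.End R (FockSpace ι R)) (majorana l) :=
  (Commute.one_left _).sub_left (occupation_commute_majorana hkl)

theorem occupation_mul_majorana_self (k : ι) :
    (occupation k * majorana k : Module.End R (FockSpace ι R)) =
      majorana k * (1 - occupation k) := by
  refine LinearMap.ext fun f => FockSpace.ext fun T => ?_
  by_cases hk : k ∈ T <;> simp [occupation_apply, majorana_apply, Finset.mem_symmDiff, hk]

/-- The fermionic annihilation operator `aₖ`. -/
def annihilation (k : ι) : Module.End R (FockSpace ι R) := majorana k * occupation k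

/-- The fermionic creation operator `a†ₖ`. -/
def creation (k : ι) : Module.End R (FockSpace ι R) := majorana k * (1 - occupation k)

theorem annihilation_apply (k : ι) (f : FockSpace ι R) (T : Finset ι) :
    annihilation k f T = if k ∈ T then 0 else jordanWignerSign k T * f (insert k T) := by
  rw [annihilation, Module.End.mul_apply, majorana_apply, occupation_apply]
  by_cases hk : k ∈ T <;> simp [hk, Finset.mem_symmDiff, symmDiff_singleton_of_notMem]

theorem creation_apply (k : ι) (f : FockSpace ι R) (T : Finset ι) :
    creation k f T = if k ∈ T then jordanWignerSign k T * f (T.erase k) else 0 := by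
  rw [creation, Module.End.mul_apply, majorana_apply, LinearMap.sub_apply, FockSpace.sub_apply,
    occupation_apply]
  by_cases hk : k ∈ T <;> simp [hk, Finset.mem_symmDiff, symmDiff_singleton_of_mem]

theorem creation_eq_occupation_mul_majorana (k : ι) :
    (creation k : Module.End R (FockSpace ι R)) = occupation k * majorana k :=
  (occupation_mul_majorana_self k).symm

theorem majorana_mul_annihilation_self (k : ι) :
    (majorana k * annihilation k : Module.End R (FockSpace ι R)) = creation k * majorana k := by
  rw [creation_eq_occupation_mul_majorana, mul_assoc, majorana_mul_self, annihilation,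
    ← mul_assoc, majorana_mul_self, one_mul, mul_one]

theorem majorana_mul_creation_self (k : ι) :
    (majorana k * creation k : Module.End R (FockSpace ι R)) = annihilation k * majorana k := by
  rw [annihilation, mul_assoc, creation_eq_occupation_mul_majorana]

theorem majorana_anticomm_annihilation {k l : ι} (hkl : k ≠ l) :
    (majorana k * annihilation l : Module.End R (FockSpace ι R)) =
      -(annihilation l * majorana k) := by
  rw [annihilation, ← mul_assoc, majorana_anticomm hkl, neg_mul, mul_assoc, mul_assoc,
    (occupation_commute_majorana hkl.symm).eq]

theorem majorana_anticomm_creation {k l : ι} (hkl : k ≠ l) :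
    (majorana k * creation l : Module.End R (FockSpace ι R)) = -(creation l * majorana k) := by
  rw [creation, ← mul_assoc, majorana_anticomm hkl, neg_mul, mul_assoc, mul_assoc,
    (one_sub_occupation_commute_majorana hkl.symm).eq]

theorem mul_mul_mul_anticomm {S : Type*} [Semigroup S] [HasDistribNeg S] {x y p q : S}
    (hxy : x * y = -(y * x)) (hpq : Commute p q) (hpy : Commute p y) (hqx : Commute q x) :
    (x * p) * (y * q) = -((y * q) * (x * p)) := by
  rw [hpy.mul_mul_mul_comm, hqx.mul_mul_mul_comm, hxy, hpq.eq, neg_mul]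

theorem annihilation_anticomm (k l : ι) :
    (annihilation k * annihilation l + annihilation l * annihilation k :
      Module.End R (FockSpace ι R)) = 0 := by
  rcases eq_or_ne k l with rfl | hkl
  · have hsq : (annihilation k * annihilation k : Module.End R (FockSpace ι R)) = 0 := by
      rw [annihilation, mul_assoc, ← mul_assoc (occupation k), occupation_mul_majorana_self,
        mul_assoc, (isIdempotentElem_occupation k).one_sub_mul_self, mul_zero, mul_zero]
    rw [hsq, add_zero]
  · exact add_eq_zero_iff_eq_neg.mpr <| mul_mul_mul_anticomm (majorana_anticomm hkl)
      (occupation_commute k l) (occupation_commute_majorana hkl)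
      (occupation_commute_majorana hkl.symm)

theorem creation_anticomm (k l : ι) :
    (creation k * creation l + creation l * creation k : Module.End R (FockSpace ι R)) = 0 := by
  rcases eq_or_ne k l with rfl | hkl
  · have hsq : (creation k * creation k : Module.End R (FockSpace ι R)) = 0 := by
      nth_rw 1 [creation]
      rw [creation_eq_occupation_mul_majorana, mul_assoc, ← mul_assoc (1 - occupation k),
        (isIdempotentElem_occupation k).one_sub_mul_self, zero_mul, mul_zero]
    rw [hsq, add_zero]
  · exact add_eq_zero_iff_eq_neg.mpr <| mul_mul_mul_anticomm (majorana_anticomm hkl)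
      ((Commute.one_left _).sub_left ((Commute.one_right _).sub_right (occupation_commute k l)))
      (one_sub_occupation_commute_majorana hkl) (one_sub_occupation_commute_majorana hkl.symm)

theorem annihilation_anticomm_creation (k l : ι) :
    (annihilation k * creation l + creation l * annihilation k : Module.End R (FockSpace ι R)) =
      if k = l then 1 else 0 := by
  rcases eq_or_ne k l with rfl | hkl
  · have hcreate : (creation k * annihilation k : Module.End R (FockSpace ι R)) = occupation k := by
      rw [creation_eq_occupation_mul_majorana, annihilation, mul_assoc, ← mul_assoc (majorana k),
        majorana_mul_self, one_mul, (isIdempotentElem_occupation k).eq]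
    have hannihilate :
        (annihilation k * creation k : Module.End R (FockSpace ι R)) = 1 - occupation k := by
      rw [creation_eq_occupation_mul_majorana, annihilation, mul_assoc, ← mul_assoc (occupation k),
        (isIdempotentElem_occupation k).eq, occupation_mul_majorana_self, ← mul_assoc,
        majorana_mul_self, one_mul]
    rw [hcreate, hannihilate, sub_add_cancel, if_pos rfl]
  · rw [if_neg hkl]
    exact add_eq_zero_iff_eq_neg.mpr <| mul_mul_mul_anticomm (majorana_anticomm hkl)
      ((Commute.one_right _).sub_right (occupation_commute k l)) (occupation_commute_majorana hkl)
      (one_sub_occupation_commute_majorana hkl.symm)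

theorem majorana_mul_majorana_mul_annihilation {i j : ι} (hij : i ≠ j) (k : ι) :
    (majorana i * majorana j * annihilation k : Module.End R (FockSpace ι R)) =
      if k = i ∨ k = j then -(creation k * (majorana i * majorana j))
      else annihilation k * (majorana i * majorana j) := by
  rcases eq_or_ne k i with rfl | hki
  · rw [if_pos (.inl rfl), mul_assoc, majorana_anticomm_annihilation hij.symm, mul_neg,
      ← mul_assoc, majorana_mul_annihilation_self, mul_assoc]
  rcases eq_or_ne k j with rfl | hkj
  · rw [if_pos (.inr rfl), mul_assoc, majorana_mul_annihilation_self, ← mul_assoc,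
      majorana_anticomm_creation hij, neg_mul, mul_assoc]
  · rw [if_neg (not_or.mpr ⟨hki, hkj⟩), mul_assoc, majorana_anticomm_annihilation hkj.symm, mul_neg,
      ← mul_assoc, majorana_anticomm_annihilation hki.symm, neg_mul, neg_neg, mul_assoc]

theorem majorana_mul_majorana_mul_creation {i j : ι} (hij : i ≠ j) (k : ι) :
    (majorana i * majorana j * creation k : Module.End R (FockSpace ι R)) =
      if k = i ∨ k = j then -(annihilation k * (majorana i * majorana j))
      else creation k * (majorana i * majorana j) := by
  rcases eq_or_ne k i with rfl | hki
  · rw [if_pos (.inl rfl), mul_assoc, majorana_anticomm_creation hij.symm, mul_neg, ← mul_assoc,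
      majorana_mul_creation_self, mul_assoc]
  rcases eq_or_ne k j with rfl | hkj
  · rw [if_pos (.inr rfl), mul_assoc, majorana_mul_creation_self, ← mul_assoc,
      majorana_anticomm_annihilation hij, neg_mul, mul_assoc]
  · rw [if_neg (not_or.mpr ⟨hki, hkj⟩), mul_assoc, majorana_anticomm_creation hkj.symm, mul_neg,
      ← mul_assoc, majorana_anticomm_creation hki.symm, neg_mul, neg_neg, mul_assoc]

theorem majorana_majorana_apply {i j : ι} (hij : i < j) (f : FockSpace ι R) (T : Finset ι) :
    majorana i (majorana j f) T =
      -(jordanWignerSign i T * jordanWignerSign j T) * f (T ∆ {i, j}) := by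
  rw [majorana_apply, majorana_apply, jordanWignerSign_symmDiff_singleton, if_pos hij,
    symmDiff_singleton_symmDiff_singleton T hij.ne]
  ring

end FermionOperators


section MinRowExpansion

variable {ι R : Type*} [LinearOrder ι] [CommRing R]

/-- The recursion satisfied by the principal sub-Pfaffians `f T = Pf(A_T)`: their expansion along
the least row. -/
def HasMinRowExpansion (A : Matrix ι ι R) (f : FockSpace ι R) : Prop :=
  ∀ ⦃k : ι⦄ ⦃T : Finset ι⦄, (∀ t ∈ T, k < t) →
    f (insert k T) = ∑ l ∈ T, A k l * (jordanWignerSign l T * f (T.erase l))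

namespace HasMinRowExpansion

variable {A : Matrix ι ι R} {f g : FockSpace ι R}

theorem eq_of_apply_empty (hf : HasMinRowExpansion A f) (hg : HasMinRowExpansion A g)
    (h : f ∅ = g ∅) : f = g := by
  ext T
  induction T using finset_strong_induction_on_min with
  | empty => exact h
  | insert k T hk ih =>
    rw [hf hk, hg hk]
    exact Finset.sum_congr rfl fun l _ => by rw [ih _ (Finset.erase_subset l T)]

theorem const_smul (hf : HasMinRowExpansion A f) (c : R) : HasMinRowExpansion A (c • f) := by
  intro k T hk
  simp only [FockSpace.smul_apply, hf hk, Finset.mul_sum, mul_left_comm c]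

theorem prod_mul (hf : HasMinRowExpansion A f) (d : ι → R) :
    HasMinRowExpansion (Matrix.of fun k l => d k * d l * A k l)
      fun T => (∏ t ∈ T, d t) * f T := by
  intro k T hk
  change (∏ t ∈ insert k T, d t) * f (insert k T) = ∑ l ∈ T,
    (d k * d l * A k l) * (jordanWignerSign l T * ((∏ t ∈ T.erase l, d t) * f (T.erase l)))
  rw [Finset.prod_insert fun h => (hk k h).false, hf hk, Finset.mul_sum]
  refine Finset.sum_congr rfl fun l hl => ?_
  rw [← Finset.mul_prod_erase T d hl]
  ring

end HasMinRowExpansion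

end MinRowExpansion

section RowExpansion

variable {ι R : Type*} [LinearOrder ι] [Fintype ι] [CommRing R]

/-- The operator `aₖ - ∑ l, A k l • a†ₗ`. For skew-symmetric `A` it vanishes on the state whose
amplitudes are the principal sub-Pfaffians of `A`: this is their expansion along the row `k`. -/
def rowOperator (A : Matrix ι ι R) (k : ι) : Module.End R (FockSpace ι R) :=
  annihilation k - ∑ l, A k l • creation l

theorem rowOperator_apply (A : Matrix ι ι R) (k : ι) (f : FockSpace ι R) (T : Finset ι) :
    rowOperator A k f T = annihilation k f T - ∑ l, A k l * creation l f T := by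
  simp only [rowOperator, LinearMap.sub_apply, LinearMap.sum_apply, LinearMap.smul_apply,
    FockSpace.sub_apply, FockSpace.sum_apply, FockSpace.smul_apply]

theorem rowOperator_apply_of_forall_lt (A : Matrix ι ι R) {k : ι} {T : Finset ι}
    (hk : ∀ t ∈ T, k < t) (f : FockSpace ι R) :
    rowOperator A k f T =
      f (insert k T) - ∑ l ∈ T, A k l * (jordanWignerSign l T * f (T.erase l)) := by
  have hkT : k ∉ T := fun h => (hk k h).false
  rw [rowOperator_apply, annihilation_apply, if_neg hkT,
    jordanWignerSign_of_forall_le fun t ht => (hk t ht).le, one_mul]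
  simp only [creation_apply, mul_ite, mul_zero, Finset.sum_ite_mem, Finset.univ_inter]

theorem annihilation_anticomm_sum_creation (k : ι) (c : ι → R) :
    annihilation k * ∑ l, c l • creation l + (∑ l, c l • creation l) * annihilation k =
      c k • (1 : Module.End R (FockSpace ι R)) := by
  simp only [Finset.mul_sum, Finset.sum_mul, ← Finset.sum_add_distrib, mul_smul_comm,
    smul_mul_assoc, ← smul_add, annihilation_anticomm_creation, smul_ite, smul_zero,
    Finset.sum_ite_eq, Finset.mem_univ, if_true]

theorem sum_creation_anticomm (c d : ι → R) :
    (∑ l, c l • creation l) * ∑ l, d l • creation l +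
      (∑ l, d l • creation l) * ∑ l, c l • creation l =
        (0 : Module.End R (FockSpace ι R)) := by
  rw [Finset.sum_mul_sum, Finset.sum_mul_sum, Finset.sum_comm, ← Finset.sum_add_distrib]
  refine Finset.sum_eq_zero fun l _ => ?_
  rw [← Finset.sum_add_distrib]
  refine Finset.sum_eq_zero fun m _ => ?_
  rw [smul_mul_smul_comm, smul_mul_smul_comm, mul_comm (d l), ← smul_add, creation_anticomm,
    smul_zero]

theorem rowOperator_anticomm (A : Matrix ι ι R) (k m : ι) :
    rowOperator A k * rowOperator A m + rowOperator A m * rowOperator A k =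
      -((A k m + A m k) • (1 : Module.End R (FockSpace ι R))) := by
  have expand (a b X Y : Module.End R (FockSpace ι R)) :
      (a - X) * (b - Y) + (b - Y) * (a - X) =
        a * b + b * a + (X * Y + Y * X) - ((b * X + X * b) + (a * Y + Y * a)) := by
    noncomm_ring
  rw [rowOperator, rowOperator, expand, annihilation_anticomm, sum_creation_anticomm,
    annihilation_anticomm_sum_creation, annihilation_anticomm_sum_creation, add_zero, zero_sub,
    add_smul]

theorem rowOperator_anticomm_of_transpose_eq_neg {A : Matrix ι ι R} (hA : A.transpose = -A)
    (k m : ι) : rowOperator A k * rowOperator A m = -(rowOperator A m * rowOperator A k) := by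
  have hskew : A m k = -A k m := congrFun₂ hA k m
  rw [← add_eq_zero_iff_eq_neg, rowOperator_anticomm, hskew, add_neg_cancel, zero_smul, neg_zero]

theorem rowOperator_apply_eq_zero_of_forall_lt (A : Matrix ι ι R) {m : ι} {g : FockSpace ι R}
    (hg : ∀ T : Finset ι, (∀ t ∈ T, m < t) → g T = 0) {k : ι} (hmk : m < k) {T : Finset ι}
    (hT : ∀ t ∈ T, m < t) : rowOperator A k g T = 0 := by
  have hinsert : g (insert k T) = 0 := hg _ (Finset.forall_mem_insert .. |>.mpr ⟨hmk, hT⟩)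
  have herase (l : ι) : g (T.erase l) = 0 := hg _ fun t ht => hT t (Finset.mem_of_mem_erase ht)
  simp only [rowOperator_apply, annihilation_apply, creation_apply, hinsert, herase, mul_zero,
    ite_self, Finset.sum_const_zero, sub_zero]

theorem hasMinRowExpansion_of_rowOperator_eq_zero {A : Matrix ι ι R} {f : FockSpace ι R}
    (hf : ∀ k, rowOperator A k f = 0) : HasMinRowExpansion A f := fun k T hk => by
  rw [← sub_eq_zero, ← rowOperator_apply_of_forall_lt A hk, hf, FockSpace.zero_apply]

theorem HasMinRowExpansion.rowOperator_apply_eq_zero {A : Matrix ι ι R} {f : FockSpace ι R}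
    (hf : HasMinRowExpansion A f) {k : ι} {T : Finset ι} (hk : ∀ t ∈ T, k < t) :
    rowOperator A k f T = 0 := by
  rw [rowOperator_apply_of_forall_lt A hk, hf hk, sub_self]

/-- A row `k` that is not the least one is reached by induction: moving `rowOperator A k` past
`rowOperator A m`, for the least index `m`, costs only a sign. -/
theorem HasMinRowExpansion.rowOperator_eq_zero [IsAddTorsionFree R] {A : Matrix ι ι R}
    {f : FockSpace ι R} (hf : HasMinRowExpansion A f) (hA : A.transpose = -A) (k : ι) :
    rowOperator A k f = 0 := by
  ext T
  induction T using finset_strong_induction_on_min with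
  | empty => exact hf.rowOperator_apply_eq_zero (by simp)
  | insert m T hm ih =>
    rcases lt_or_ge k m with hkm | hmk
    · exact hf.rowOperator_apply_eq_zero
        (Finset.forall_mem_insert .. |>.mpr ⟨hkm, fun t ht => hkm.trans (hm t ht)⟩)
    have hinsert : rowOperator A m (rowOperator A k f) T = rowOperator A k f (insert m T) := by
      rw [rowOperator_apply_of_forall_lt A hm, Finset.sum_eq_zero, sub_zero]
      intro l _
      rw [ih _ (Finset.erase_subset l T), FockSpace.zero_apply, mul_zero, mul_zero]
    have hanti : rowOperator A m (rowOperator A k f) T = -rowOperator A k (rowOperator A m f) T :=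
      congrFun (LinearMap.congr_fun (rowOperator_anticomm_of_transpose_eq_neg hA m k) f) T
    rw [← hinsert, FockSpace.zero_apply]
    rcases hmk.eq_or_lt with rfl | hmk
    · exact self_eq_neg.mp hanti
    · rw [hanti, rowOperator_apply_eq_zero_of_forall_lt A
        (fun _ => hf.rowOperator_apply_eq_zero) hmk hm, neg_zero]

end RowExpansion

section Permutations

variable {N : ℕ}

/-- The defining property of the permutations that index the Pfaffian sum. -/
def IsPfaffianPerm (σ : Equiv.Perm (Fin N)) : Prop :=
  ∀ p q : Fin N, 2 ∣ (p : ℕ) → p ≤ q → σ p ≤ σ q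

theorem exists_decomposeFin_symm_zero_eq {τ : Equiv.Perm (Fin (N + 1))} (hτ : τ 0 = 0) :
    ∃ e, Equiv.Perm.decomposeFin.symm (0, e) = τ := by
  obtain ⟨⟨p, e⟩, rfl⟩ := Equiv.Perm.decomposeFin.symm.surjective τ
  rw [Equiv.Perm.decomposeFin_symm_apply_zero] at hτ
  exact ⟨e, by rw [hτ]⟩

/-- The permutation of `Fin (N + 2)` that fixes `0`, sends `1` to `l + 1`, and permutes the
remaining indices, in the order given by `Fin.succAbove`, as `e` does. -/
def pairZeroWith (l : Fin (N + 1)) (e : Equiv.Perm (Fin N)) : Equiv.Perm (Fin (N + 2)) :=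
  Equiv.Perm.decomposeFin.symm (0, l.cycleRange.symm * Equiv.Perm.decomposeFin.symm (0, e))

theorem pairZeroWith_zero (l : Fin (N + 1)) (e : Equiv.Perm (Fin N)) :
    pairZeroWith l e 0 = 0 :=
  Equiv.Perm.decomposeFin_symm_apply_zero _ _

theorem pairZeroWith_one (l : Fin (N + 1)) (e : Equiv.Perm (Fin N)) :
    pairZeroWith l e (Fin.succ 0) = l.succ := by
  simp [pairZeroWith]

theorem pairZeroWith_succ_succ (l : Fin (N + 1)) (e : Equiv.Perm (Fin N)) (x : Fin N) :
    pairZeroWith l e x.succ.succ = (l.succAbove (e x)).succ := by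
  simp [pairZeroWith, Equiv.Perm.decomposeFin_symm_apply_succ]

theorem sign_pairZeroWith (l : Fin (N + 1)) (e : Equiv.Perm (Fin N)) :
    Equiv.Perm.sign (pairZeroWith l e) = (-1) ^ (l : ℕ) * Equiv.Perm.sign e := by
  simp [pairZeroWith, Equiv.Perm.decomposeFin.symm_sign, Fin.sign_cycleRange]

theorem pairZeroWith_injective :
    Function.Injective fun x : Fin (N + 1) × Equiv.Perm (Fin N) => pairZeroWith x.1 x.2 := by
  rintro ⟨l, e⟩ ⟨l', e'⟩ h
  obtain rfl : l = l' := by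
    simpa only [pairZeroWith_one, Fin.succ_inj] using DFunLike.congr_fun h (Fin.succ 0)
  refine Prod.ext rfl (Equiv.ext fun x => ?_)
  simpa only [pairZeroWith_succ_succ, Fin.succ_inj, Fin.succAbove_right_inj] using
    DFunLike.congr_fun h x.succ.succ

theorem exists_pairZeroWith_eq {σ : Equiv.Perm (Fin (N + 2))} (hσ : σ 0 = 0) :
    ∃ l e, pairZeroWith l e = σ := by
  obtain ⟨τ, rfl⟩ := exists_decomposeFin_symm_zero_eq hσ
  obtain ⟨e, he⟩ := exists_decomposeFin_symm_zero_eq (τ := (τ 0).cycleRange * τ) (by simp)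
  refine ⟨τ 0, e, ?_⟩
  rw [pairZeroWith, he, ← mul_assoc, ← Equiv.Perm.inv_def, inv_mul_cancel, one_mul]

theorem isPfaffianPerm_pairZeroWith {l : Fin (N + 1)} {e : Equiv.Perm (Fin N)} :
    IsPfaffianPerm (pairZeroWith l e) ↔ IsPfaffianPerm e := by
  have hle (p q : Fin N) :
      pairZeroWith l e p.succ.succ ≤ pairZeroWith l e q.succ.succ ↔ e p ≤ e q := by
    rw [pairZeroWith_succ_succ, pairZeroWith_succ_succ, Fin.succ_le_succ_iff,
      (Fin.strictMono_succAbove l).le_iff_le]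
  have hdvd (p : Fin N) : 2 ∣ (p.succ.succ : ℕ) ↔ 2 ∣ (p : ℕ) := by
    simp only [Fin.val_succ]; omega
  constructor
  · intro h p q hp hpq
    exact (hle p q).mp (h _ _ ((hdvd p).mpr hp) (by simpa using hpq))
  · intro h p q hp hpq
    cases p using Fin.cases with
    | zero => exact pairZeroWith_zero l e ▸ Fin.zero_le _
    | succ p =>
    cases p using Fin.cases with
    | zero => simp at hp
    | succ p =>
    obtain ⟨q, rfl⟩ := Fin.exists_succ_eq.mpr (Fin.ne_zero_of_lt (p.succ.succ_pos.trans_le hpq))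
    rw [Fin.succ_le_succ_iff] at hpq
    obtain ⟨q, rfl⟩ := Fin.exists_succ_eq.mpr (Fin.ne_zero_of_lt (p.succ_pos.trans_le hpq))
    exact (hle p q).mpr (h p q ((hdvd p).mp hp) (Fin.succ_le_succ_iff.mp hpq))

theorem IsPfaffianPerm.map_zero {σ : Equiv.Perm (Fin (N + 2))} (hσ : IsPfaffianPerm σ) :
    σ 0 = 0 := by
  simpa using hσ 0 (σ.symm 0) (by simp) (Fin.zero_le _)

end Permutations

section Pfaffian

theorem pfaffian_eq_zero_of_not_two_dvd {N : ℕ} (hN : ¬2 ∣ N) (A : Matrix (Fin N) (Fin N) ℝ) :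
    pfaffian A = 0 :=
  dif_neg hN

theorem prod_pairs_succ {M : Type*} [CommMonoid M] {N : ℕ} (F : Fin (N + 2) → Fin (N + 2) → M) :
    ∏ k : Fin ((N + 2) / 2), F ⟨2 * k, by omega⟩ ⟨2 * k + 1, by omega⟩ =
      F 0 (Fin.succ 0) * ∏ k : Fin (N / 2),
        F (Fin.succ (Fin.succ ⟨2 * k, by omega⟩)) (Fin.succ (Fin.succ ⟨2 * k + 1, by omega⟩)) := by
  rw [← (finCongr (Nat.add_div_right N two_pos).symm).prod_comp, Fin.prod_univ_succ]
  rfl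

theorem pfaffian_succ_succ {N : ℕ} (A : Matrix (Fin (N + 2)) (Fin (N + 2)) ℝ) :
    pfaffian A = ∑ l : Fin (N + 1), (-1) ^ (l : ℕ) * A 0 l.succ *
      pfaffian (A.submatrix (Fin.succ ∘ l.succAbove) (Fin.succ ∘ l.succAbove)) := by
  by_cases hN : 2 ∣ N
  · rw [pfaffian, dif_pos (by omega)]
    simp only [pfaffian, dif_pos hN, Finset.mul_sum]
    rw [← Finset.sum_product']
    symm
    refine Finset.sum_bij (fun x _ => pairZeroWith x.1 x.2) ?_
      (fun _ _ _ _ h => pairZeroWith_injective h) ?_ ?_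
    · intro x hx
      simp only [Finset.mem_product, Finset.mem_filter_univ, Finset.mem_univ, true_and] at hx ⊢
      exact isPfaffianPerm_pairZeroWith.mpr hx
    · intro σ hσ
      have hσ : IsPfaffianPerm σ := (Finset.mem_filter.mp hσ).2
      obtain ⟨l, e, rfl⟩ := exists_pairZeroWith_eq hσ.map_zero
      refine ⟨(l, e), ?_, rfl⟩
      simp only [Finset.mem_product, Finset.mem_filter_univ, Finset.mem_univ, true_and]
      exact isPfaffianPerm_pairZeroWith.mp hσ
    · rintro ⟨l, e⟩ _
      rw [sign_pairZeroWith,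
        prod_pairs_succ fun p q => A (pairZeroWith l e p) (pairZeroWith l e q)]
      simp only [pairZeroWith_zero, pairZeroWith_one, pairZeroWith_succ_succ,
        Matrix.submatrix_apply, Function.comp_apply]
      push_cast
      ring
  · rw [pfaffian_eq_zero_of_not_two_dvd (by omega)]
    simp only [pfaffian_eq_zero_of_not_two_dvd hN, mul_zero, Finset.sum_const_zero]

end Pfaffian

section PfMinor

variable {n : ℕ}

theorem pfMinor_image {N : ℕ} (A : Matrix (Fin n) (Fin n) ℝ) {φ : Fin N → Fin n}
    (hφ : StrictMono φ) : pfMinor A (Finset.univ.image φ) = pfaffian (A.submatrix φ φ) := by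
  have of_card_eq {S : Finset (Fin n)} (hS : S.card = N) (hφS : ∀ x, φ x ∈ S) :
      pfMinor A S = pfaffian (A.submatrix φ φ) := by
    subst hS
    rw [Finset.orderEmbOfFin_unique rfl hφS hφ]
    rfl
  exact of_card_eq (by rw [Finset.card_image_of_injective _ hφ.injective, Finset.card_fin])
    fun x => Finset.mem_image_of_mem φ (Finset.mem_univ x)

theorem pfMinor_empty (A : Matrix (Fin n) (Fin n) ℝ) : pfMinor A ∅ = 1 := by
  rw [← Finset.image_empty Fin.elim0, ← Finset.univ_eq_empty,
    pfMinor_image A (fun x => x.elim0)]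
  simp [pfaffian]

theorem jordanWignerSign_image {ι R : Type*} [LinearOrder ι] [CommRing R] {N : ℕ} {φ : Fin N → ι}
    (hφ : StrictMono φ) (x : Fin N) :
    (jordanWignerSign (φ x) (Finset.univ.image φ) : R) = (-1) ^ (x : ℕ) := by
  rw [jordanWignerSign, Finset.prod_image hφ.injective.injOn]
  simp only [hφ.lt_iff_lt]
  rw [Finset.prod_ite, Finset.prod_const, Finset.prod_const_one, mul_one, Finset.filter_gt_eq_Iio,
    Fin.card_Iio]

theorem erase_image_univ {α : Type*} [DecidableEq α] {N : ℕ} {φ : Fin (N + 1) → α}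
    (hφ : Function.Injective φ) (x : Fin (N + 1)) :
    (Finset.univ.image φ).erase (φ x) = Finset.univ.image (φ ∘ x.succAbove) := by
  rw [← Finset.image_erase hφ, ← Finset.image_image, Fin.image_succAbove_univ,
    Finset.compl_singleton]

theorem hasMinRowExpansion_pfMinor (A : Matrix (Fin n) (Fin n) ℝ) :
    HasMinRowExpansion A (pfMinor A) := by
  intro k T hk
  rcases T.eq_empty_or_nonempty with rfl | hT
  · exact pfaffian_eq_zero_of_not_two_dvd (by simp) _
  obtain ⟨N, hN⟩ : ∃ N, T.card = N + 1 := Nat.exists_eq_succ_of_ne_zero hT.card_ne_zero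
  obtain ⟨φ, hφ, rfl⟩ : ∃ φ : Fin (N + 1) → Fin n, StrictMono φ ∧ Finset.univ.image φ = T :=
    ⟨T.orderEmbOfFin hN, (T.orderEmbOfFin hN).strictMono, T.image_orderEmbOfFin_univ hN⟩
  have hcons : StrictMono (Fin.cons k φ : Fin (N + 2) → Fin n) := by
    refine Fin.strictMono_iff_lt_succ.mpr fun x => ?_
    cases x using Fin.cases with
    | zero => exact hk _ (Finset.mem_image_of_mem φ (Finset.mem_univ 0))
    | succ x => exact hφ x.castSucc_lt_succ
  have hinsert : insert k (Finset.univ.image φ) =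
      Finset.univ.image (Fin.cons k φ : Fin (N + 2) → Fin n) := by
    rw [Fin.univ_succ (N + 1), Finset.cons_eq_insert, Finset.image_insert, Finset.map_eq_image,
      Finset.image_image]
    rfl
  rw [hinsert, pfMinor_image A hcons, pfaffian_succ_succ, Finset.sum_image hφ.injective.injOn]
  refine Finset.sum_congr rfl fun x _ => ?_
  rw [jordanWignerSign_image hφ, erase_image_univ hφ.injective,
    pfMinor_image A (hφ.comp (Fin.strictMono_succAbove x)), mul_assoc, mul_left_comm]
  rfl

theorem pfMinor_pair (A : Matrix (Fin n) (Fin n) ℝ) {i j : Fin n} (hij : i < j) :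
    pfMinor A {i, j} = A i j := by
  rw [hasMinRowExpansion_pfMinor A (by simpa using hij), Finset.sum_singleton,
    jordanWignerSign_of_forall_le (by simp), Finset.erase_singleton, pfMinor_empty, mul_one,
    mul_one]

end PfMinor

section ColumnExchange

variable {n : ℕ}

theorem swapRight_mulVec_sub_swapLeft_mulVec (A : Matrix (Fin n) (Fin n) ℝ) (i j : Fin n)
    (u v : Fin n → ℝ) :
    (swapRight A i j).mulVec v - (swapLeft A i j).mulVec u =
      (fun l => if l = i ∨ l = j then -u l else v l) -
        A.mulVec fun l => if l = i ∨ l = j then -v l else u l := by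
  ext r
  simp only [Pi.sub_apply, Matrix.mulVec, dotProduct, swapRight, swapLeft, Matrix.of_apply,
    ← Finset.sum_sub_distrib]
  rw [← Fintype.sum_ite_eq r fun l => if l = i ∨ l = j then -u l else v l,
    ← Finset.sum_sub_distrib]
  refine Finset.sum_congr rfl fun l _ => ?_
  split_ifs <;> ring

theorem ne_of_transpose_eq_neg_of_apply_ne_zero {A : Matrix (Fin n) (Fin n) ℝ}
    (hA : A.transpose = -A) {i j : Fin n} (ha : A i j ≠ 0) : i ≠ j := by
  rintro rfl
  exact ha (self_eq_neg.mp (congrFun₂ hA i i))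

theorem eq_zero_of_swapRight_mulVec_eq_zero {A : Matrix (Fin n) (Fin n) ℝ}
    (hA : A.transpose = -A) {i j : Fin n} (ha : A i j ≠ 0) {w : Fin n → ℝ}
    (hw : (swapRight A i j).mulVec w = 0) : w = 0 := by
  have hij : i ≠ j := ne_of_transpose_eq_neg_of_apply_ne_zero hA ha
  have hskew (k l : Fin n) : A l k = -A k l := congrFun₂ hA k l
  have hdiag (k : Fin n) : A k k = 0 := self_eq_neg.mp (hskew k k)
  have hrow (r : Fin n) :
      (if r = i ∨ r = j then 0 else w r) + (A r i * w i + A r j * w j) = 0 := by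
    have hcolumns (l : Fin n) : A r l * (if l = i ∨ l = j then -w l else 0) =
        -((if l = i then A r l * w l else 0) + if l = j then A r l * w l else 0) := by
      grind
    have hcombination : (if r = i ∨ r = j then 0 else w r) -
        (-(A r i * w i) + -(A r j * w j)) = 0 := by
      simpa [hw, Matrix.mulVec, dotProduct, hcolumns, Finset.sum_add_distrib, add_comm] using
        (congrFun (swapRight_mulVec_sub_swapLeft_mulVec A i j 0 w) r).symm
    linear_combination hcombination
  have hwi : w i = 0 := by simpa [hdiag, hskew i j, ha] using hrow j
  have hwj : w j = 0 := by simpa [hdiag, ha] using hrow i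
  ext r
  by_cases hr : r = i ∨ r = j
  · rcases hr with rfl | rfl
    exacts [hwi, hwj]
  · simpa [hr, hwi, hwj] using hrow r

/-- Conjugation by `γᵢ γⱼ` exchanges `a` and `-a†` at the sites `i` and `j`, just as the columns
`i` and `j` of `A` and of the identity matrix are exchanged. -/
theorem rowOperator_majorana_majorana_eq_zero {A B : Matrix (Fin n) (Fin n) ℝ}
    (hA : A.transpose = -A) {i j : Fin n} (ha : A i j ≠ 0)
    (hB : swapRight A i j * B = swapLeft A i j) {f : FockSpace (Fin n) ℝ}
    (hf : ∀ k, rowOperator A k f = 0) (k : Fin n) :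
    rowOperator B k (majorana i (majorana j f)) = 0 := by
  have hij : i ≠ j := ne_of_transpose_eq_neg_of_apply_ne_zero hA ha
  ext T
  set u : Fin n → ℝ := fun l => creation l (majorana i (majorana j f)) T
  set v : Fin n → ℝ := fun l => annihilation l (majorana i (majorana j f)) T
  have hannihilation (l : Fin n) : (if l = i ∨ l = j then -u l else v l) =
      majorana i (majorana j (annihilation l f)) T := by
    have h := congrFun (LinearMap.congr_fun (majorana_mul_majorana_mul_annihilation hij l) f) T
    split_ifs at h ⊢ <;> exact h.symm
  have hcreation (l : Fin n) : (if l = i ∨ l = j then -v l else u l) =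
      majorana i (majorana j (creation l f)) T := by
    have h := congrFun (LinearMap.congr_fun (majorana_mul_majorana_mul_creation hij l) f) T
    split_ifs at h ⊢ <;> exact h.symm
  have hexchange : (swapRight A i j).mulVec v = (swapLeft A i j).mulVec u := by
    rw [← sub_eq_zero, swapRight_mulVec_sub_swapLeft_mulVec]
    ext r
    have hr : majorana i (majorana j (rowOperator A r f)) T = 0 := by simp [hf]
    simpa only [rowOperator, LinearMap.sub_apply, LinearMap.sum_apply, LinearMap.smul_apply,
      map_sub, map_sum, map_smul, FockSpace.sub_apply, FockSpace.sum_apply, FockSpace.smul_apply,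
      Pi.sub_apply, Pi.zero_apply, Matrix.mulVec, dotProduct, hannihilation, hcreation] using hr
  have hvu : v - B.mulVec u = 0 := by
    refine eq_zero_of_swapRight_mulVec_eq_zero hA ha ?_
    rw [Matrix.mulVec_sub, Matrix.mulVec_mulVec, hB, hexchange, sub_self]
  rw [rowOperator_apply]
  exact congrFun hvu k

theorem jordanWignerSign_mul_eq_prod_rhoSign {i j : Fin n} (hij : i ≤ j) (T : Finset (Fin n)) :
    (jordanWignerSign i T * jordanWignerSign j T : ℝ) = ∏ t ∈ T, rhoSign i j t := by
  rw [jordanWignerSign, jordanWignerSign, ← Finset.prod_mul_distrib]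
  refine Finset.prod_congr rfl fun t _ => ?_
  rw [rhoSign]
  rcases lt_or_ge t i with hi | hi
  · rw [if_pos hi, if_pos (hi.trans_le hij), if_neg fun h => hi.not_ge h.1, neg_mul_neg, mul_one]
  · rw [if_neg hi.not_gt, one_mul]
    simp only [hi, true_and]

theorem prod_rhoSign_mul_majorana_majorana_apply {i j : Fin n} (hij : i < j)
    (f : FockSpace (Fin n) ℝ) (T : Finset (Fin n)) :
    (∏ t ∈ T, rhoSign i j t) * majorana i (majorana j f) T = -f (T ∆ {i, j}) := by
  rw [majorana_majorana_apply hij, jordanWignerSign_mul_eq_prod_rhoSign hij.le, ← mul_assoc,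
    mul_neg, ← jordanWignerSign_mul_eq_prod_rhoSign hij.le, mul_mul_mul_comm,
    jordanWignerSign_mul_self, jordanWignerSign_mul_self, mul_one, neg_one_mul]

theorem HasMinRowExpansion.symmDiff_pair {B : Matrix (Fin n) (Fin n) ℝ} {i j : Fin n} (hij : i < j)
    {f : FockSpace (Fin n) ℝ} (hf : HasMinRowExpansion B (majorana i (majorana j f))) :
    HasMinRowExpansion (Matrix.of fun k l => rhoSign i j k * rhoSign i j l * B k l)
      fun T => f (T ∆ {i, j}) := by
  have hgauge : (fun T => f (T ∆ {i, j}) : FockSpace (Fin n) ℝ) =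
      (-1 : ℝ) • (fun T => (∏ t ∈ T, rhoSign i j t) * majorana i (majorana j f) T :
        FockSpace (Fin n) ℝ) := by
    ext T
    change f (T ∆ {i, j}) = -1 * ((∏ t ∈ T, rhoSign i j t) * majorana i (majorana j f) T)
    rw [prod_rhoSign_mul_majorana_majorana_apply hij, neg_one_mul, neg_neg]
  exact hgauge ▸ (hf.prod_mul (rhoSign i j)).const_smul (-1)

theorem hasMinRowExpansion_pfMinor_symmDiff {A B : Matrix (Fin n) (Fin n) ℝ}
    (hA : A.transpose = -A) {i j : Fin n} (hij : i < j) (ha : A i j ≠ 0)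
    (hB : swapRight A i j * B = swapLeft A i j) :
    HasMinRowExpansion (Matrix.of fun k l => rhoSign i j k * rhoSign i j l * B k l)
      fun T => pfMinor A (T ∆ {i, j}) :=
  .symmDiff_pair hij <| hasMinRowExpansion_of_rowOperator_eq_zero <|
    rowOperator_majorana_majorana_eq_zero hA ha hB <|
      (hasMinRowExpansion_pfMinor A).rowOperator_eq_zero hA

theorem mul_pfMinor_columnExchange {A B : Matrix (Fin n) (Fin n) ℝ}
    (hA : A.transpose = -A) {i j : Fin n} (hij : i < j) (ha : A i j ≠ 0)
    (hB : swapRight A i j * B = swapLeft A i j) (S : Finset (Fin n)) :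
    A i j * pfMinor (Matrix.of fun k l => rhoSign i j k * rhoSign i j l * B k l) S =
      pfMinor A (S ∆ {i, j}) := by
  refine congrFun (((hasMinRowExpansion_pfMinor _).const_smul (A i j)).eq_of_apply_empty
    (hasMinRowExpansion_pfMinor_symmDiff hA hij ha hB) ?_) S
  change A i j * pfMinor _ ∅ = pfMinor A (∅ ∆ {i, j})
  rw [pfMinor_empty, mul_one, ← Finset.bot_eq_empty, bot_symmDiff, pfMinor_pair A hij]

end ColumnExchange

/-- The sign map obtained from a skew-symmetric real matrix is invariant under
basis change up to global sign: if `A` is skew-symmetric with `a_{ij} ≠ 0` (`i < j`)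
and `C` is the matrix obtained by the column-exchange-and-sign-change construction
at `{i, j}`, then the map `S ↦ sign Pf(C_S)` equals the map
`S ↦ sign Pf(A_{S Δ {i,j}})` times the constant `sign(a_{ij})`; in particular the
two families of signs agree up to a single global sign. -/
theorem columnExchange_sign_invariance {n : ℕ} (A B : Matrix (Fin n) (Fin n) ℝ)
    (hA : A.transpose = -A) (i j : Fin n) (hij : i < j) (ha : A i j ≠ 0)
    (hB : swapRight A i j * B = swapLeft A i j) :
    (∀ S : Finset (Fin n),
      SignType.sign
          (pfMinor (Matrix.of fun k l => rhoSign i j k * rhoSign i j l * B k l) S) =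
        SignType.sign (A i j) * SignType.sign (pfMinor A (symmDiff S {i, j}))) ∧
    ∃ c : SignType, (c = 1 ∨ c = -1) ∧
      ∀ S : Finset (Fin n),
        SignType.sign
            (pfMinor (Matrix.of fun k l => rhoSign i j k * rhoSign i j l * B k l) S) =
          c * SignType.sign (pfMinor A (symmDiff S {i, j})) := by
  have hsign (S : Finset (Fin n)) :
      SignType.sign (pfMinor (Matrix.of fun k l => rhoSign i j k * rhoSign i j l * B k l) S) =
        SignType.sign (A i j) * SignType.sign (pfMinor A (symmDiff S {i, j})) := by
    rw [← mul_pfMinor_columnExchange hA hij ha hB S, sign_mul, ← mul_assoc, ← sign_mul,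
      sign_pos (mul_self_pos.mpr ha), one_mul]
  refine ⟨hsign, SignType.sign (A i j), ?_, hsign⟩
  rcases lt_or_gt_of_ne ha with hneg | hpos
  · exact .inr (sign_neg hneg)
  · exact .inl (sign_pos hpos)
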